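/- Let Q = 2n+2, m ≥ 1, 1 < p_i < ∞ with 0 < 1/p = Σ 1/p_i ≤ 1. Then ∫_{(ℝ^{2n+1})^m} (∏_{i=1}^m |y_i|_h^{-Q/p_i}) / (1 + |y₁|_h^Q + ⋯ + |y_m|_h^Q)^m dy₁⋯dy_m = (ω_Q/Q)^m · (∏_{i=1}^m Γ(1 - 1/p_i)) · Γ(1/p) / Γ(m), where ω_Q = Q·Ω_Q. -/

import Mathlib

open MeasureTheory Real Finset

/-- The Heisenberg norm on ℝ^{2n+1}. -/
noncomputable def hNorm (n : ℕ) (x : Fin (2 * n + 1) → ℝ) : ℝ :=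
  ((∑ i : Fin (2 * n), (x (Fin.castLE (by omega) i)) ^ 2) ^ 2 +
      (x ⟨2 * n, by omega⟩) ^ 2) ^ ((1 : ℝ) / 4)

/-- The Heisenberg dilations on ℝ^{2n+1}: the first 2n coordinates are scaled by r,
the last by r². -/
def hDil (n : ℕ) (r : ℝ) (x : Fin (2 * n + 1) → ℝ) : Fin (2 * n + 1) → ℝ :=
  fun i => if (i : ℕ) < 2 * n then r * x i else r ^ 2 * x i

lemma hil_gamma {s a : ℝ} (hs : 0 < s) (ha : 0 < a) :
    ∫⁻ u in Set.Ioi (0:ℝ), ENNReal.ofReal (u ^ (s - 1) * exp (-(a * u))) =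
      ENNReal.ofReal (a ^ (-s) * Real.Gamma s) := by
  rw [← ofReal_integral_eq_lintegral_ofReal]
  · rw [integral_rpow_mul_exp_neg_mul_Ioi hs ha, one_div, inv_rpow ha.le, rpow_neg ha.le]
  · have := integrableOn_rpow_mul_exp_neg_mul_rpow (p := 1) (s := s - 1) (b := a) (by linarith)
      one_pos ha
    simpa [IntegrableOn] using this
  · filter_upwards [ae_restrict_mem measurableSet_Ioi] with u hu
    have : (0:ℝ) < u := hu
    positivity

lemma hil_prod {E : Type*} [MeasureSpace E] [SigmaFinite (volume : Measure E)] (m : ℕ)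
    (f : Fin m → E → ENNReal) (hf : ∀ i, Measurable (f i)) :
    ∫⁻ y : Fin m → E, ∏ i, f i (y i) = ∏ i, ∫⁻ x, f i x := by
  induction m with
  | zero => simp [volume_pi]
  | succ k ih =>
    have hmp := (volume_preserving_piFinSuccAbove (fun _ : Fin (k+1) => E) 0).symm
    rw [← hmp.lintegral_comp (by fun_prop)]
    simp_rw [Fin.prod_univ_succ]
    have h := lintegral_prod_mul (μ := (volume : Measure E)) (ν := (volume : Measure (Fin k → E)))
      (f := f 0) (g := fun y => ∏ i, f i.succ (y i)) (hf 0).aemeasurable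
      (by
        have := fun i : Fin k => hf i.succ
        exact (Finset.measurable_prod _ fun i _ => (hf i.succ).comp (measurable_pi_apply i)).aemeasurable)
    rw [ih _ (fun i => hf i.succ)] at h
    rw [← h]
    rfl

lemma hNorm_nonneg' (n : ℕ) (x) : 0 ≤ hNorm n x := by
  unfold hNorm; positivity

lemma hNorm_meas (n : ℕ) : Measurable (hNorm n) := by
  unfold hNorm; fun_prop

lemma hNorm_dil (n : ℕ) {r : ℝ} (hr : 0 < r) (x) : hNorm n (hDil n r x) = r * hNorm n x := by
  unfold hNorm hDil
  have h1 : ∀ i : Fin (2*n), (i:ℕ) < 2 * n := fun i => i.2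
  simp only [Fin.val_castLE, h1, if_true, lt_irrefl, if_false, mul_pow, ← Finset.mul_sum]
  have : (r ^ 2) ^ 2 * (∑ i : Fin (2*n), x (Fin.castLE (by omega) i) ^ 2) ^ 2
      + (r ^ 2) ^ 2 * x ⟨2 * n, by omega⟩ ^ 2 =
      r ^ (4:ℝ) * ((∑ i : Fin (2*n), x (Fin.castLE (by omega) i) ^ 2) ^ 2
      + x ⟨2 * n, by omega⟩ ^ 2) := by
    norm_cast; ring
  rw [this, mul_rpow (by positivity) (by positivity), ← rpow_mul hr.le]
  norm_num

lemma hil_vol_dil (n : ℕ) {r : ℝ} (hr : 0 < r) (s : Set (Fin (2*n+1) → ℝ)) :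
    volume (hDil n r ⁻¹' s) = ENNReal.ofReal ((r ^ (2*n+2))⁻¹) * volume s := by
  let D : Fin (2*n+1) → ℝ := fun i => if (i:ℕ) < 2*n then r else r^2
  have hdet : LinearMap.det (Matrix.toLin' (Matrix.diagonal D)) = r ^ (2*n+2) := by
    rw [LinearMap.det_toLin', Matrix.det_diagonal, Fin.prod_univ_castSucc]
    simp [D, pow_add]
  have h := Measure.addHaar_preimage_linearMap (volume : Measure (Fin (2*n+1) → ℝ))
    (f := Matrix.toLin' (Matrix.diagonal D)) (by rw [hdet]; positivity) s
  rw [hdet, abs_of_pos (by positivity)] at h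
  rw [← h]
  congr 1
  ext x
  simp only [Set.mem_preimage]
  have : hDil n r x = Matrix.toLin' (Matrix.diagonal D) x := by
    ext i
    simp only [hDil, Matrix.toLin'_apply, Matrix.mulVec_diagonal, D]
    split_ifs <;> rfl
  rw [this]

lemma hil_fin (n : ℕ) : volume {x : Fin (2 * n + 1) → ℝ | hNorm n x < 1} ≠ ⊤ := by
  refine ((measure_mono ?_).trans_lt (measure_Icc_lt_top (a := fun _ => (-1:ℝ)) (b := fun _ => (1:ℝ)))).ne
  intro x hx
  have h1 : (∑ i : Fin (2 * n), (x (Fin.castLE (by omega) i)) ^ 2) ^ 2 +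
      (x ⟨2 * n, by omega⟩) ^ 2 < 1 := by
    by_contra hc
    have := one_le_rpow (not_lt.1 hc) (by norm_num : (0:ℝ) ≤ 1/4)
    exact absurd hx (not_lt.2 this)
  have h0 : 0 ≤ ∑ i : Fin (2 * n), (x (Fin.castLE (by omega) i)) ^ 2 := by positivity
  have h2 : ∑ i : Fin (2 * n), (x (Fin.castLE (by omega) i)) ^ 2 ≤ 1 := by
    nlinarith [sq_nonneg (x ⟨2 * n, by omega⟩)]
  have key : ∀ i, |x i| ≤ 1 := by
    intro i
    rw [← sq_le_one_iff_abs_le_one]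
    by_cases hi : (i:ℕ) < 2*n
    · have := Finset.single_le_sum (f := fun i : Fin (2*n) => (x (Fin.castLE (by omega) i)) ^ 2)
        (fun i _ => sq_nonneg _) (Finset.mem_univ ⟨i, hi⟩)
      exact this.trans h2
    · have : i = ⟨2*n, by omega⟩ := by ext; simp; omega
      rw [this]; nlinarith
  exact ⟨fun i => (abs_le.1 (key i)).1, fun i => (abs_le.1 (key i)).2⟩

lemma hil_map (n : ℕ) :
    Measure.map (fun x => hNorm n x ^ (2 * n + 2 : ℝ)) volume =
      volume {x : Fin (2 * n + 1) → ℝ | hNorm n x < 1} • volume.restrict (Set.Ioi (0:ℝ)) := by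
  have hm : Measurable (fun x => hNorm n x ^ (2 * n + 2 : ℝ)) := (hNorm_meas n).pow_const _
  have e1 : ∀ b : ℝ, Measure.map (fun x => hNorm n x ^ (2 * n + 2 : ℝ)) volume (Set.Iio b) =
      ENNReal.ofReal b * volume {x : Fin (2 * n + 1) → ℝ | hNorm n x < 1} := by
    intro b
    rw [Measure.map_apply hm measurableSet_Iio]
    rcases le_or_gt b 0 with hb | hb
    · rw [ENNReal.ofReal_of_nonpos hb, zero_mul]
      convert measure_empty (μ := volume)
      ext x
      simp only [Set.mem_preimage, Set.mem_Iio, Set.mem_empty_iff_false, iff_false, not_lt]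
      exact hb.trans (rpow_nonneg (hNorm_nonneg' n x) _)
    · set r : ℝ := b ^ (-(1 / (2 * n + 2 : ℝ))) with hr
      have hr0 : 0 < r := rpow_pos_of_pos hb _
      have hrQ : r ^ (2*n+2) = b⁻¹ := by
        rw [hr, ← rpow_natCast, ← rpow_mul hb.le, ← rpow_neg_one]
        congr 1; push_cast; field_simp
      have hrQ' : r ^ (2*n+2:ℝ) = b⁻¹ := by
        rw [← hrQ, ← rpow_natCast]; push_cast; rfl
      have := hil_vol_dil n hr0 {x | hNorm n x < 1}
      rw [hrQ, inv_inv] at this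
      rw [← this]
      congr 1
      ext x
      simp only [Set.mem_preimage, Set.mem_Iio, Set.mem_ofPred_eq, hNorm_dil n hr0]
      have h0 := hNorm_nonneg' n x
      rw [← rpow_lt_rpow_iff (z := (2*n+2:ℝ)) (by positivity) zero_le_one (by positivity),
        one_rpow, mul_rpow hr0.le h0, hrQ', inv_mul_lt_iff₀ hb, mul_one]
  have e2 : ∀ b : ℝ, (volume {x : Fin (2 * n + 1) → ℝ | hNorm n x < 1} •
      volume.restrict (Set.Ioi (0:ℝ))) (Set.Iio b) =
      ENNReal.ofReal b * volume {x : Fin (2 * n + 1) → ℝ | hNorm n x < 1} := by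
    intro b
    rw [Measure.smul_apply, Measure.restrict_apply measurableSet_Iio, Set.Iio_inter_Ioi]
    simp [mul_comm]
  refine Measure.ext_of_generateFrom_of_iUnion (Set.range Set.Iio) (fun k : ℕ => Set.Iio (k:ℝ))
    ?_ isPiSystem_Iio ?_ (fun k => ⟨_, rfl⟩) ?_ ?_
  · rw [← borel_eq_generateFrom_Iio]; exact BorelSpace.measurable_eq
  · ext x; simpa using exists_nat_gt x
  · intro k
    rw [e1]
    exact ENNReal.mul_ne_top ENNReal.ofReal_ne_top (hil_fin n)
  · rintro _ ⟨b, rfl⟩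
    rw [e1, e2]

lemma hil_one (n : ℕ) {q t : ℝ} (hq : 1 < q) (ht : 0 < t) :
    ∫⁻ x, ENNReal.ofReal ((hNorm n x ^ (2 * n + 2 : ℝ)) ^ (-(1 / q)) *
      exp (-(t * hNorm n x ^ (2 * n + 2 : ℝ)))) =
    volume {x : Fin (2 * n + 1) → ℝ | hNorm n x < 1} *
      ENNReal.ofReal (t ^ (-(1 - 1/q)) * Real.Gamma (1 - 1/q)) := by
  have hm : Measurable (fun x => hNorm n x ^ (2 * n + 2 : ℝ)) := (hNorm_meas n).pow_const _
  have hq' : 1 / q < 1 := by rw [div_lt_one (by linarith)]; exact hq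
  have := lintegral_map (μ := volume) (g := fun x => hNorm n x ^ (2 * n + 2 : ℝ))
    (f := fun u : ℝ => ENNReal.ofReal (u ^ (-(1/q)) * exp (-(t * u)))) (by fun_prop) hm
  rw [← this, hil_map, lintegral_smul_measure, smul_eq_mul, ← hil_gamma (by linarith) ht]
  simp

theorem hilbert_integral (n m : ℕ) (hm : 1 ≤ m) (p : ℝ) (q : Fin m → ℝ)
    (hq : ∀ i, 1 < q i) (hp : 1 / p = ∑ i, 1 / q i) (hp0 : 0 < 1 / p) (hp1 : 1 / p ≤ 1) :
    ∫ y : Fin m → (Fin (2 * n + 1) → ℝ),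
        (∏ i, hNorm n (y i) ^ (-((2 * n + 2 : ℝ)) / q i)) /
          (1 + ∑ i, hNorm n (y i) ^ (2 * n + 2 : ℝ)) ^ m =
      (((2 * n + 2 : ℝ) * (volume {x : Fin (2 * n + 1) → ℝ | hNorm n x < 1}).toReal) /
            (2 * n + 2 : ℝ)) ^ m *
        ((∏ i, Real.Gamma (1 - 1 / q i)) * Real.Gamma (1 / p) / Real.Gamma m) := by
  have hmeas := hNorm_meas n
  set N : (Fin (2 * n + 1) → ℝ) → ℝ := fun x => hNorm n x ^ (2 * n + 2 : ℝ) with hN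
  have hNm : Measurable N := hmeas.pow_const _
  have hN0 : ∀ x, 0 ≤ N x := fun x => rpow_nonneg (hNorm_nonneg' n x) _
  have hm0 : (0:ℝ) < m := by exact_mod_cast hm
  have hG : 0 < Real.Gamma m := Gamma_pos_of_pos hm0
  set Ω := volume {x : Fin (2 * n + 1) → ℝ | hNorm n x < 1} with hΩ
  have hrew : ∀ x (a : ℝ), hNorm n x ^ (-((2 * n + 2 : ℝ)) / a) = N x ^ (-(1/a)) := by
    intro x a
    rw [hN]; simp only
    rw [← rpow_mul (hNorm_nonneg' n x)]; congr 1; ring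
  simp_rw [hrew]
  rw [show (fun x => hNorm n x ^ (2 * n + 2 : ℝ)) = N from rfl] at *
  change ∫ y : Fin m → (Fin (2 * n + 1) → ℝ), (∏ i, N (y i) ^ (-(1 / q i))) /
    (1 + ∑ i, N (y i)) ^ m = _
  have hpos : ∀ y : Fin m → (Fin (2 * n + 1) → ℝ), 0 < 1 + ∑ i, N (y i) := fun y =>
    add_pos_of_pos_of_nonneg one_pos (Finset.sum_nonneg fun i _ => hN0 _)
  have hprod : ∀ y : Fin m → (Fin (2 * n + 1) → ℝ), 0 ≤ ∏ i, N (y i) ^ (-(1 / q i)) := fun y =>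
    Finset.prod_nonneg fun i _ => rpow_nonneg (hN0 _) _
  rw [integral_eq_lintegral_of_nonneg_ae
    (Filter.Eventually.of_forall fun y => div_nonneg (hprod y) (pow_nonneg (hpos y).le _))
    (by
      apply Measurable.aestronglyMeasurable
      fun_prop)]
  have hq' : ∀ i, 0 < 1 - 1 / q i := fun i => by
    have : 1 / q i < 1 := by rw [div_lt_one (by linarith [hq i])]; exact hq i
    linarith
  -- pointwise representation
  have hpt : ∀ y : Fin m → (Fin (2 * n + 1) → ℝ),
      ENNReal.ofReal ((∏ i, N (y i) ^ (-(1 / q i))) / (1 + ∑ i, N (y i)) ^ m) =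
      ∫⁻ t in Set.Ioi (0:ℝ), ENNReal.ofReal ((Real.Gamma m)⁻¹ * (t ^ ((m:ℝ) - 1) * exp (-(1 * t)))) *
        ∏ i, ENNReal.ofReal (N (y i) ^ (-(1 / q i)) * exp (-(t * N (y i)))) := by
    intro y
    have hg := hil_gamma hm0 (hpos y)
    have : (∏ i, N (y i) ^ (-(1 / q i))) / (1 + ∑ i, N (y i)) ^ m =
        ((∏ i, N (y i) ^ (-(1 / q i))) * (Real.Gamma m)⁻¹) *
          ((1 + ∑ i, N (y i)) ^ (-(m:ℝ)) * Real.Gamma m) := by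
      rw [rpow_neg (hpos y).le, rpow_natCast]; field_simp
    rw [this, ENNReal.ofReal_mul (mul_nonneg (hprod y) (by positivity)), ← hg,
      ← lintegral_const_mul _ (by fun_prop)]
    refine setLIntegral_congr_fun measurableSet_Ioi fun t ht => ?_
    have ht : 0 < t := ht
    rw [← ENNReal.ofReal_prod_of_nonneg
      (fun i _ => mul_nonneg (rpow_nonneg (hN0 _) _) (exp_pos _).le),
      ← ENNReal.ofReal_mul (mul_nonneg (hprod y) (by positivity)),
      ← ENNReal.ofReal_mul (by positivity), Finset.prod_mul_distrib, ← exp_sum,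
      Finset.sum_neg_distrib, ← Finset.mul_sum]
    rw [show -((1 + ∑ i, N (y i)) * t) = -(1 * t) + -(t * ∑ i, N (y i)) by ring, exp_add]
    congr 1; ring
  simp_rw [hpt]
  rw [lintegral_lintegral_swap (by
    apply Measurable.aemeasurable
    unfold Function.uncurry
    fun_prop)]
  have hin : ∀ t ∈ Set.Ioi (0:ℝ), (∫⁻ y : Fin m → (Fin (2 * n + 1) → ℝ),
      ENNReal.ofReal ((Real.Gamma m)⁻¹ * (t ^ ((m:ℝ) - 1) * exp (-(1 * t)))) *
        ∏ i, ENNReal.ofReal (N (y i) ^ (-(1 / q i)) * exp (-(t * N (y i))))) =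
      (Ω ^ m * ENNReal.ofReal ((Real.Gamma m)⁻¹ * ∏ i, Real.Gamma (1 - 1 / q i))) *
        ENNReal.ofReal (t ^ (1/p - 1) * exp (-(1 * t))) := by
    intro t ht
    have ht : 0 < t := ht
    rw [lintegral_const_mul _ (by fun_prop), hil_prod m
      (fun i x => ENNReal.ofReal (N x ^ (-(1 / q i)) * exp (-(t * N x)))) (fun i => by fun_prop)]
    rw [Finset.prod_congr rfl (fun i _ => hil_one n (hq i) ht), Finset.prod_mul_distrib,
      Finset.prod_const, Finset.card_univ, Fintype.card_fin,
      ← ENNReal.ofReal_prod_of_nonneg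
      (fun i _ => mul_nonneg (rpow_nonneg ht.le _) (Gamma_pos_of_pos (hq' i)).le), mul_left_comm,
      mul_assoc, ← ENNReal.ofReal_mul (by positivity), ← ENNReal.ofReal_mul
      (mul_nonneg (by positivity) (Finset.prod_nonneg fun i _ => (Gamma_pos_of_pos (hq' i)).le)),
      Finset.prod_mul_distrib, ← rpow_sum_of_pos ht]
    have : t ^ (1/p - 1) = t ^ ((m:ℝ) - 1) * t ^ (∑ i, -(1 - 1 / q i)) := by
      rw [← rpow_add ht]
      congr 1
      rw [Finset.sum_neg_distrib, Finset.sum_sub_distrib, ← hp]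
      simp
    rw [this]
    congr 2; ring
  rw [setLIntegral_congr_fun measurableSet_Ioi hin, lintegral_const_mul _ (by fun_prop),
    hil_gamma hp0 one_pos]
  have hGp := (Gamma_pos_of_pos hp0).le
  have hGq : 0 ≤ ∏ i, Real.Gamma (1 - 1 / q i) :=
    Finset.prod_nonneg fun i _ => (Gamma_pos_of_pos (hq' i)).le
  rw [ENNReal.toReal_mul, ENNReal.toReal_mul, ENNReal.toReal_pow,
    ENNReal.toReal_ofReal (by positivity), ENNReal.toReal_ofReal (by rw [one_rpow]; positivity),
    mul_div_cancel_left₀ _ (by positivity), one_rpow]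
  field_simp
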